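/- arXiv:2202.07753 — 2 statements merged into one kernel-verified Lean document; each statement's English description precedes it below -/
import Mathlib

section
/- For i = 1, 2, let (f_i, a_i, ρ_i, Z_i, π_i) be as in the two-parameter one-dimensional explicit invariant density setup, let h : ℝ → ℝ be continuous with |h(y)| ≤ K(1+|y|^m), set h̄₂ = ∫_ℝ h π₂ dy and F(y) = ∫_{−∞}^y (h(s) − h̄₂)π₂(s) ds, and let v be the explicit Poisson solution for the pair (f₂, a₂), i.e. v'(y) = F(y)/(a₂(y)π₂(y)) and v''(y) = (h(y) − h̄₂)/a₂(y) − f₂(y)F(y)/(a₂(y)²π₂(y)). Then ∫_ℝ ( f₁(y)v'(y) + a₁(y)v''(y) ) π₁(y) dy = 0; that is, the generator with the first pair of coefficients, applied to the Poisson solution associated with the second pair, integrates to zero against the invariant density of the first pair. -/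
open MeasureTheory

noncomputable section

/-- The explicit (unnormalized) one-dimensional invariant density
`ρ(y) = a(y)⁻¹ exp(∫₀^y f(s)/a(s) ds)`. -/
def rho1 (a f : ℝ → ℝ) (y : ℝ) : ℝ :=
  (a y)⁻¹ * Real.exp (∫ s in (0:ℝ)..y, f s / a s)

/-- The normalizing constant `Z = ∫_ℝ ρ(y) dy`. -/
def Z1 (a f : ℝ → ℝ) : ℝ := ∫ y, rho1 a f y

/-- The normalized invariant density `π = ρ / Z`. -/
def piDen (a f : ℝ → ℝ) (y : ℝ) : ℝ := rho1 a f y / Z1 a f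

/-- The average `h̄ = ∫_ℝ h(y) π(y) dy`. -/
def hbar (a f h : ℝ → ℝ) : ℝ := ∫ y, h y * piDen a f y

/-- `F(y) = ∫_{−∞}^y (h(s) − h̄) π(s) ds`. -/
def Fint (a f h : ℝ → ℝ) (y : ℝ) : ℝ :=
  ∫ s in Set.Iic y, (h s - hbar a f h) * piDen a f s

/-- The explicit solution `v(y) = ∫₀^y F(s)/(a(s)π(s)) ds` of the one-dimensional
Poisson equation `a v'' + f v' = h − h̄`. -/
def vsol (a f h : ℝ → ℝ) (y : ℝ) : ℝ :=
  ∫ s in (0:ℝ)..y, Fint a f h s / (a s * piDen a f s)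

/-!
With `u = v'`, the integrand is in divergence form: `(f₁ u + a₁ u') π₁ = (a₁ π₁ u)'`, and `a₁ π₁`
is a multiple of the integrating factor `exp (∫₀^y f₁ / a₁)`. The centring of `h - h̄₂` allows `u`
to be written as an integral over the tail at either end, so that `u` grows no faster than the
data, while the integrating factor decays faster than every exponential. Hence `a₁ π₁ u` and its
derivative are integrable, and the integral of the derivative vanishes.
-/

open Filter Asymptotics Set Topology

/-- The integrating factor `exp (∫₀^y b)` of the linear equation `u' + b u = q`. For `b = f / a` it
is `a ρ`, the invariant density before division by the diffusion coefficient. -/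
def integratingFactor (b : ℝ → ℝ) (y : ℝ) : ℝ := Real.exp (∫ s in (0 : ℝ)..y, b s)

/-- The solution of `u' + b u = -q` given by integration over the tail `(y, ∞)`. If `b → -∞` at
`+∞`, the other solutions grow there like `1 / integratingFactor b`. -/
def tailSolution (b q : ℝ → ℝ) (y : ℝ) : ℝ :=
  (∫ s in Ioi y, q s * integratingFactor b s) / integratingFactor b y

/-- The solution of `u' + b u = q` given by integration over the tail `(-∞, y]`. With `b = f / a` and
`q = (h - h̄) / a` this is the derivative `v'` of the explicit Poisson solution. -/
def poissonDeriv (b q : ℝ → ℝ) (y : ℝ) : ℝ :=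
  (∫ s in Iic y, q s * integratingFactor b s) / integratingFactor b y

/-- A drift that pushes towards the origin with strength growing without bound at both ends. -/
structure IsConfining (b : ℝ → ℝ) : Prop where
  tendsto_atTop : Tendsto b atTop atBot
  tendsto_atBot : Tendsto b atBot atTop

section IntegratingFactor

variable {b : ℝ → ℝ}

lemma integratingFactor_pos (b : ℝ → ℝ) (y : ℝ) : 0 < integratingFactor b y := Real.exp_pos _

lemma hasDerivAt_integratingFactor (hb : Continuous b) (y : ℝ) :
    HasDerivAt (integratingFactor b) (integratingFactor b y * b y) y :=
  (hb.integral_hasStrictDerivAt 0 y).hasDerivAt.exp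

lemma continuous_integratingFactor (hb : Continuous b) : Continuous (integratingFactor b) :=
  continuous_iff_continuousAt.2 fun y => (hasDerivAt_integratingFactor hb y).continuousAt

lemma hasDerivAt_mul_integratingFactor {u : ℝ → ℝ} {u' y : ℝ} (hb : Continuous b)
    (hu : HasDerivAt u u' y) :
    HasDerivAt (fun s => u s * integratingFactor b s)
      ((u' + b y * u y) * integratingFactor b y) y :=
  (hu.mul (hasDerivAt_integratingFactor hb y)).congr_deriv (by ring)

lemma integratingFactor_comp_neg (b : ℝ → ℝ) (y : ℝ) :
    integratingFactor (fun t => -b (-t)) y = integratingFactor b (-y) := by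
  simp only [integratingFactor, intervalIntegral.integral_neg,
    intervalIntegral.integral_comp_neg, neg_zero]
  rw [← intervalIntegral.integral_symm]

lemma isBigO_integratingFactor_exp (hb : Continuous b) (htop : Tendsto b atTop atBot) (c : ℝ) :
    integratingFactor b =O[atTop] fun y => Real.exp (-c * y) := by
  obtain ⟨R, hR⟩ := eventually_atTop.1 (htop.eventually_le_atBot (-c))
  refine IsBigO.of_bound (integratingFactor b R * Real.exp (c * R)) ?_
  filter_upwards [eventually_ge_atTop R] with y hy
  have hint : ∫ s in R..y, b s ≤ -c * (y - R) := by
    calc ∫ s in R..y, b s ≤ ∫ _ in R..y, -c :=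
          intervalIntegral.integral_mono_on hy (hb.intervalIntegrable _ _)
            intervalIntegrable_const fun s hs => hR s hs.1
      _ = -c * (y - R) := by rw [intervalIntegral.integral_const, smul_eq_mul, mul_comm]
  rw [Real.norm_of_nonneg (integratingFactor_pos b y).le, Real.norm_of_nonneg (Real.exp_pos _).le,
    integratingFactor, integratingFactor, ← Real.exp_add, ← Real.exp_add, Real.exp_le_exp,
    ← intervalIntegral.integral_add_adjacent_intervals (hb.intervalIntegrable 0 R)
      (hb.intervalIntegrable R y)]
  linarith

end IntegratingFactor

section AtTop

variable {b b₁ b₂ q : ℝ → ℝ} {γ : ℝ}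

lemma isBigO_mul_integratingFactor (hb : Continuous b) (htop : Tendsto b atTop atBot)
    (hq : q =O[atTop] fun y => Real.exp (γ * y)) :
    (fun y => q y * integratingFactor b y) =O[atTop] fun y => Real.exp (-1 * y) := by
  refine (hq.mul (isBigO_integratingFactor_exp hb htop (γ + 1))).congr_right fun y => ?_
  rw [← Real.exp_add]
  ring_nf

lemma integrableOn_mul_integratingFactor (hb : Continuous b) (htop : Tendsto b atTop atBot)
    (hqc : Continuous q) (hq : q =O[atTop] fun y => Real.exp (γ * y)) (c : ℝ) :
    IntegrableOn (fun y => q y * integratingFactor b y) (Ioi c) :=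
  integrable_of_isBigO_exp_neg one_pos (hqc.mul (continuous_integratingFactor hb)).continuousOn
    (isBigO_mul_integratingFactor hb htop hq)

lemma tendsto_mul_integratingFactor (hb : Continuous b) (htop : Tendsto b atTop atBot)
    (hq : q =O[atTop] fun y => Real.exp (γ * y)) :
    Tendsto (fun y => q y * integratingFactor b y) atTop (𝓝 0) := by
  refine (isBigO_mul_integratingFactor hb htop hq).trans_tendsto ?_
  simpa using Real.tendsto_exp_neg_atTop_nhds_zero

lemma hasDerivAt_tailSolution (hb : Continuous b) (hqc : Continuous q)
    (hint : ∀ c, IntegrableOn (fun y => q y * integratingFactor b y) (Ioi c)) (y : ℝ) :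
    HasDerivAt (tailSolution b q) (-q y - b y * tailSolution b q y) y := by
  have hcont : Continuous fun s => q s * integratingFactor b s :=
    hqc.mul (continuous_integratingFactor hb)
  have htail : (fun y => ∫ s in Ioi y, q s * integratingFactor b s) = fun y =>
      (∫ s in Ioi 0, q s * integratingFactor b s) -
        ∫ s in (0 : ℝ)..y, q s * integratingFactor b s := by
    funext y
    rw [← intervalIntegral.integral_interval_add_Ioi (hint 0) (hint y), add_sub_cancel_left]
  have htail_deriv := (hcont.integral_hasStrictDerivAt 0 y).hasDerivAt.const_sub
    (∫ s in Ioi 0, q s * integratingFactor b s)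
  rw [← htail] at htail_deriv
  have hpos := (integratingFactor_pos b y).ne'
  refine (htail_deriv.div (hasDerivAt_integratingFactor hb y) hpos).congr_deriv ?_
  simp only [tailSolution]
  field_simp

lemma abs_tailSolution_le {p : ℝ → ℝ} {y : ℝ}
    (hint : IntegrableOn (fun s => p s * integratingFactor b s) (Ioi y))
    (hqp : ∀ s ∈ Ioi y, |q s| ≤ p s) : |tailSolution b q y| ≤ tailSolution b p y := by
  rw [tailSolution, abs_div, abs_of_pos (integratingFactor_pos b y)]
  refine div_le_div_of_nonneg_right ?_ (integratingFactor_pos b y).le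
  refine norm_integral_le_of_norm_le (f := fun s => q s * integratingFactor b s) hint
    ((ae_restrict_mem measurableSet_Ioi).mono fun s hs => ?_)
  rw [Real.norm_eq_abs, abs_mul, abs_of_pos (integratingFactor_pos b s)]
  exact mul_le_mul_of_nonneg_right (hqp s hs) (integratingFactor_pos b s).le

lemma hasDerivAt_const_mul_exp (D γ y : ℝ) :
    HasDerivAt (fun s => D * Real.exp (γ * s)) (γ * (D * Real.exp (γ * y))) y :=
  ((((hasDerivAt_id y).const_mul γ).exp).const_mul D).congr_deriv (by simp only [id]; ring)

lemma tailSolution_exp_le {R D y : ℝ} (hb : Continuous b) (htop : Tendsto b atTop atBot)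
    (hR : ∀ s, R ≤ s → b s ≤ -(γ + 1)) (hD : 0 ≤ D) (hy : R ≤ y) :
    tailSolution b (fun s => D * Real.exp (γ * s)) y ≤ D * Real.exp (γ * y) := by
  set p : ℝ → ℝ := fun s => D * Real.exp (γ * s)
  have hpO : p =O[atTop] fun s => Real.exp (γ * s) := isBigO_const_mul_self D _ _
  have hderiv (s : ℝ) : HasDerivAt (fun s => p s * integratingFactor b s)
      ((γ * p s + b s * p s) * integratingFactor b s) s :=
    hasDerivAt_mul_integratingFactor hb (hasDerivAt_const_mul_exp D γ s)
  have hnonneg (s : ℝ) : 0 ≤ p s * integratingFactor b s :=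
    mul_nonneg (by positivity) (integratingFactor_pos b s).le
  have hle (s : ℝ) (hs : s ∈ Ioi y) :
      (γ * p s + b s * p s) * integratingFactor b s ≤ -(p s * integratingFactor b s) := by
    nlinarith [hR s (hy.trans hs.le), hnonneg s]
  have hnonpos (s : ℝ) (hs : s ∈ Ioi y) : (γ * p s + b s * p s) * integratingFactor b s ≤ 0 :=
    (hle s hs).trans (neg_nonpos.2 (hnonneg s))
  have hlim := tendsto_mul_integratingFactor hb htop hpO
  have hmono : ∫ s in Ioi y, (γ * p s + b s * p s) * integratingFactor b s ≤
      ∫ s in Ioi y, -(p s * integratingFactor b s) :=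
    setIntegral_mono_on
      (integrableOn_Ioi_deriv_of_nonpos' (fun s _ => hderiv s) hnonpos hlim)
      (integrableOn_mul_integratingFactor hb htop (by fun_prop) hpO y).neg measurableSet_Ioi hle
  rw [integral_Ioi_of_hasDerivAt_of_nonpos' (fun s _ => hderiv s) hnonpos hlim,
    integral_neg] at hmono
  rw [tailSolution, div_le_iff₀ (integratingFactor_pos b y)]
  linarith

lemma isBigO_tailSolution (hb : Continuous b) (htop : Tendsto b atTop atBot)
    (hq : q =O[atTop] fun y => Real.exp (γ * y)) :
    tailSolution b q =O[atTop] fun y => Real.exp (γ * y) := by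
  obtain ⟨D, hD, hqD⟩ := hq.exists_pos
  obtain ⟨R, hR⟩ := eventually_atTop.1 ((htop.eventually_le_atBot (-(γ + 1))).and hqD.bound)
  refine IsBigO.of_bound D ?_
  filter_upwards [eventually_ge_atTop R] with y hy
  have hint := integrableOn_mul_integratingFactor hb htop (by fun_prop)
    (isBigO_const_mul_self D (fun s => Real.exp (γ * s)) atTop) y
  rw [Real.norm_of_nonneg (Real.exp_pos _).le]
  calc |tailSolution b q y|
      ≤ tailSolution b (fun s => D * Real.exp (γ * s)) y :=
        abs_tailSolution_le hint fun s hs => by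
          simpa only [Real.norm_eq_abs, Real.abs_exp] using (hR s (hy.trans hs.le)).2
    _ ≤ D * Real.exp (γ * y) := tailSolution_exp_le hb htop (fun s hs => (hR s hs).1) hD.le hy

lemma abs_flux_density_le {β₁ β₂ u v p r : ℝ} (hγ : 0 ≤ γ) (hβ₁ : β₁ ≤ -(γ + 1))
    (hβ₂ : β₂ ≤ -(γ + 1)) (huv : |u| ≤ v) (hvp : v ≤ p) (hrp : |r| ≤ p) :
    |(-r - β₂ * u) + β₁ * u| ≤
      ((-p - β₂ * v) - 2 * (γ + 2) * (γ * p)) + β₁ * (v - 2 * (γ + 2) * p) := by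
  have hv : 0 ≤ v := (abs_nonneg u).trans huv
  have hβ : |β₁ - β₂| ≤ -β₁ - β₂ := abs_le.2 ⟨by linarith, by linarith⟩
  have habs : |(-r - β₂ * u) + β₁ * u| ≤ (-β₁ - β₂) * v + p := by
    calc |(-r - β₂ * u) + β₁ * u| = |(β₁ - β₂) * u - r| := by ring_nf
      _ ≤ |β₁ - β₂| * |u| + |r| := (abs_sub _ _).trans_eq (by rw [abs_mul])
      _ ≤ (-β₁ - β₂) * v + p := add_le_add (mul_le_mul hβ huv (abs_nonneg u) (by linarith)) hrp
  have hv_cost : 2 * β₁ * p ≤ 2 * β₁ * v := by nlinarith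
  have hβ₁_cost : 0 ≤ (γ + 1) * (-β₁ - (γ + 1)) * p :=
    mul_nonneg (mul_nonneg (by linarith) (by linarith)) (hv.trans hvp)
  linarith

/- The coefficients may be arbitrarily large and oscillating, so the integrand is not controlled by
the decay of `integratingFactor b₁`. Instead, with `p = D exp (γ ·)` dominating `q`, it is dominated
by the derivative of `(tailSolution b₂ p - 2 (γ + 2) p) * integratingFactor b₁`, which has a
limit at `+∞`. -/
lemma integrableAtFilter_deriv_tailSolution_mul_integratingFactor (hγ : 0 ≤ γ)
    (hb₁ : Continuous b₁) (htop₁ : Tendsto b₁ atTop atBot)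
    (hb₂ : Continuous b₂) (htop₂ : Tendsto b₂ atTop atBot)
    (hqc : Continuous q) (hq : q =O[atTop] fun y => Real.exp (γ * y)) :
    IntegrableAtFilter (fun y => ((-q y - b₂ y * tailSolution b₂ q y) +
      b₁ y * tailSolution b₂ q y) * integratingFactor b₁ y) atTop := by
  obtain ⟨D, hD, hqD⟩ := hq.exists_pos
  obtain ⟨R, hR⟩ := eventually_atTop.1 (((htop₁.eventually_le_atBot (-(γ + 1))).and
    (htop₂.eventually_le_atBot (-(γ + 1)))).and hqD.bound)
  set p : ℝ → ℝ := fun s => D * Real.exp (γ * s)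
  have hpc : Continuous p := by fun_prop
  have hpO : p =O[atTop] fun s => Real.exp (γ * s) := isBigO_const_mul_self D _ _
  have hqp (s : ℝ) (hs : R ≤ s) : |q s| ≤ p s := by
    simpa only [Real.norm_eq_abs, Real.abs_exp] using (hR s hs).2
  have hqint := integrableOn_mul_integratingFactor hb₂ htop₂ hqc hq
  have hpint := integrableOn_mul_integratingFactor hb₂ htop₂ hpc hpO
  have hmajorant (y : ℝ) := hasDerivAt_mul_integratingFactor hb₁
    ((hasDerivAt_tailSolution hb₂ hpc hpint y).sub
      ((hasDerivAt_const_mul_exp D γ y).const_mul (2 * (γ + 2))))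
  have hlim := tendsto_mul_integratingFactor hb₁ htop₁
    ((isBigO_tailSolution hb₂ htop₂ hpO).sub (hpO.const_mul_left (2 * (γ + 2))))
  have hdom (y : ℝ) (hy : y ∈ Ioi R) := mul_le_mul_of_nonneg_right
    (abs_flux_density_le hγ (hR y hy.le).1.1 (hR y hy.le).1.2
      (abs_tailSolution_le (hpint y) fun s hs => hqp s (hy.trans hs).le)
      (tailSolution_exp_le hb₂ htop₂ (fun s hs => (hR s hs).1.2) hD.le hy.le) (hqp y hy.le))
    (integratingFactor_pos b₁ y).le
  have hu : Continuous (tailSolution b₂ q) := continuous_iff_continuousAt.2 fun y =>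
    (hasDerivAt_tailSolution hb₂ hqc hqint y).continuousAt
  have hIF := continuous_integratingFactor hb₁
  have hmajorant_int := integrableOn_Ioi_deriv_of_nonneg' (fun y _ => hmajorant y)
    (fun y hy =>
      (mul_nonneg (abs_nonneg _) (integratingFactor_pos b₁ y).le).trans (hdom y hy)) hlim
  refine ⟨Ioi R, Ioi_mem_atTop R, hmajorant_int.mono' ?_ ?_⟩
  · exact Continuous.aestronglyMeasurable (by fun_prop)
  · refine (ae_restrict_mem measurableSet_Ioi).mono fun y hy => ?_
    rw [Real.norm_eq_abs, abs_mul, abs_of_pos (integratingFactor_pos b₁ y)]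
    exact hdom y hy

end AtTop

section TwoSided

variable {b b₁ b₂ q : ℝ → ℝ} {γ : ℝ}

lemma IsConfining.comp_neg (hb : IsConfining b) : IsConfining fun t => -b (-t) where
  tendsto_atTop := tendsto_neg_atTop_atBot.comp (hb.tendsto_atBot.comp tendsto_neg_atTop_atBot)
  tendsto_atBot := tendsto_neg_atBot_atTop.comp (hb.tendsto_atTop.comp tendsto_neg_atBot_atTop)

lemma isBigO_atTop_of_cocompact (hq : q =O[cocompact ℝ] fun y => Real.exp (γ * |y|)) :
    q =O[atTop] fun y => Real.exp (γ * y) :=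
  (hq.mono atTop_le_cocompact).congr' .rfl <|
    (eventually_ge_atTop 0).mono fun y hy => by simp only [abs_of_nonneg hy]

lemma isBigO_comp_neg_atTop_of_cocompact (hq : q =O[cocompact ℝ] fun y => Real.exp (γ * |y|)) :
    (fun y => q (-y)) =O[atTop] fun y => Real.exp (γ * y) :=
  isBigO_atTop_of_cocompact <| by
    simpa only [Function.comp_def, Homeomorph.coe_neg, abs_neg] using
      hq.comp_tendsto (Homeomorph.neg ℝ).isClosedEmbedding.tendsto_cocompact

lemma integrable_of_integrableAtFilter_atTop_comp_neg {g : ℝ → ℝ} (hg : Continuous g)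
    (htop : IntegrableAtFilter g atTop) (hbot : IntegrableAtFilter (fun y => g (-y)) atTop) :
    Integrable g := by
  refine integrable_iff_integrableAtFilter_atBot_atTop.2 ⟨⟨?_, htop⟩, hg.locallyIntegrable⟩
  have hneg := (Homeomorph.neg ℝ).measurableEmbedding.integrableAtFilter_map_iff
    (f := g) (l := atTop) (μ := volume)
  have hmap : map (Homeomorph.neg ℝ) atTop = (atBot : Filter ℝ) := map_neg_atTop
  have hvol : Measure.map (Homeomorph.neg ℝ) (volume : Measure ℝ) = volume :=
    Measure.map_neg_eq_self _
  rw [hmap, hvol] at hneg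
  exact hneg.2 hbot

lemma integrable_mul_integratingFactor (hbc : Continuous b) (hb : IsConfining b)
    (hqc : Continuous q) (hq : q =O[cocompact ℝ] fun y => Real.exp (γ * |y|)) :
    Integrable fun y => q y * integratingFactor b y := by
  refine integrable_of_integrableAtFilter_atTop_comp_neg
    (hqc.mul (continuous_integratingFactor hbc))
    ⟨Ioi 0, Ioi_mem_atTop 0, integrableOn_mul_integratingFactor hbc hb.tendsto_atTop hqc
      (isBigO_atTop_of_cocompact hq) 0⟩
    ⟨Ioi 0, Ioi_mem_atTop 0, ?_⟩
  simpa only [integratingFactor_comp_neg] using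
    integrableOn_mul_integratingFactor (by fun_prop) hb.comp_neg.tendsto_atTop
      (q := fun t => q (-t)) (by fun_prop) (isBigO_comp_neg_atTop_of_cocompact hq) 0

lemma poissonDeriv_comp_neg (b q : ℝ → ℝ) (y : ℝ) :
    poissonDeriv b q (-y) = tailSolution (fun t => -b (-t)) (fun t => q (-t)) y := by
  simp only [poissonDeriv, tailSolution, integratingFactor_comp_neg]
  rw [← integral_comp_neg_Ioi y fun s => q s * integratingFactor b s]

lemma poissonDeriv_eq_neg_tailSolution
    (hint : Integrable fun y => q y * integratingFactor b y)
    (hzero : ∫ y, q y * integratingFactor b y = 0) :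
    poissonDeriv b q = fun y => -tailSolution b q y := by
  funext y
  have hsplit := intervalIntegral.integral_Iic_add_Ioi (b := y) hint.integrableOn hint.integrableOn
  rw [poissonDeriv, tailSolution, ← neg_div, eq_neg_of_add_eq_zero_left (hsplit.trans hzero)]

lemma hasDerivAt_poissonDeriv (hbc : Continuous b) (hqc : Continuous q)
    (hint : Integrable fun y => q y * integratingFactor b y)
    (hzero : ∫ y, q y * integratingFactor b y = 0) (y : ℝ) :
    HasDerivAt (poissonDeriv b q) (q y - b y * poissonDeriv b q y) y := by
  rw [poissonDeriv_eq_neg_tailSolution hint hzero]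
  exact (hasDerivAt_tailSolution hbc hqc (fun _ => hint.integrableOn) y).neg.congr_deriv
    (by ring)

lemma continuous_poissonDeriv (hbc : Continuous b) (hqc : Continuous q)
    (hint : Integrable fun y => q y * integratingFactor b y)
    (hzero : ∫ y, q y * integratingFactor b y = 0) : Continuous (poissonDeriv b q) :=
  continuous_iff_continuousAt.2 fun y =>
    (hasDerivAt_poissonDeriv hbc hqc hint hzero y).continuousAt

lemma isBigO_poissonDeriv (hbc : Continuous b) (hb : IsConfining b) (hqc : Continuous q)
    (hq : q =O[cocompact ℝ] fun y => Real.exp (γ * |y|))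
    (hzero : ∫ y, q y * integratingFactor b y = 0) :
    poissonDeriv b q =O[cocompact ℝ] fun y => Real.exp (γ * |y|) := by
  rw [cocompact_eq_atBot_atTop]
  refine IsBigO.sup ?_ ?_
  · have hneg := (isBigO_tailSolution (by fun_prop) hb.comp_neg.tendsto_atTop
      (isBigO_comp_neg_atTop_of_cocompact hq)).comp_tendsto tendsto_neg_atBot_atTop
    refine hneg.congr' (.of_forall fun y => ?_) ?_
    · simp only [Function.comp_apply, ← poissonDeriv_comp_neg, neg_neg]
    · filter_upwards [eventually_le_atBot 0] with y hy
      rw [Function.comp_apply, abs_of_nonpos hy]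
  · rw [poissonDeriv_eq_neg_tailSolution
      (integrable_mul_integratingFactor hbc hb hqc hq) hzero]
    refine (isBigO_tailSolution hbc hb.tendsto_atTop
      (isBigO_atTop_of_cocompact hq)).neg_left.congr' .rfl ?_
    filter_upwards [eventually_ge_atTop 0] with y hy
    rw [abs_of_nonneg hy]

lemma integrable_deriv_poissonDeriv_mul_integratingFactor (hγ : 0 ≤ γ)
    (hbc₁ : Continuous b₁) (hb₁ : IsConfining b₁) (hbc₂ : Continuous b₂) (hb₂ : IsConfining b₂)
    (hqc : Continuous q) (hq : q =O[cocompact ℝ] fun y => Real.exp (γ * |y|))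
    (hzero : ∫ y, q y * integratingFactor b₂ y = 0) :
    Integrable fun y => ((q y - b₂ y * poissonDeriv b₂ q y) + b₁ y * poissonDeriv b₂ q y) *
      integratingFactor b₁ y := by
  have hint := integrable_mul_integratingFactor hbc₂ hb₂ hqc hq
  have hu := continuous_poissonDeriv hbc₂ hqc hint hzero
  have hIF := continuous_integratingFactor hbc₁
  refine integrable_of_integrableAtFilter_atTop_comp_neg (by fun_prop) ?_ ?_
  · rw [poissonDeriv_eq_neg_tailSolution hint hzero]
    convert (integrableAtFilter_deriv_tailSolution_mul_integratingFactor hγ hbc₁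
      hb₁.tendsto_atTop hbc₂ hb₂.tendsto_atTop hqc (isBigO_atTop_of_cocompact hq)).neg using 1
    funext y
    simp only [Pi.neg_apply]
    ring
  · convert (integrableAtFilter_deriv_tailSolution_mul_integratingFactor hγ
      (b₁ := fun t => -b₁ (-t)) (by fun_prop) hb₁.comp_neg.tendsto_atTop
      (b₂ := fun t => -b₂ (-t)) (by fun_prop) hb₂.comp_neg.tendsto_atTop
      (q := fun t => q (-t)) (by fun_prop) (isBigO_comp_neg_atTop_of_cocompact hq)).neg using 1
    funext y
    simp only [Pi.neg_apply, poissonDeriv_comp_neg, integratingFactor_comp_neg]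
    ring

theorem integral_deriv_poissonDeriv_mul_integratingFactor (hγ : 0 ≤ γ)
    (hbc₁ : Continuous b₁) (hb₁ : IsConfining b₁) (hbc₂ : Continuous b₂) (hb₂ : IsConfining b₂)
    (hqc : Continuous q) (hq : q =O[cocompact ℝ] fun y => Real.exp (γ * |y|))
    (hzero : ∫ y, q y * integratingFactor b₂ y = 0) :
    ∫ y, ((q y - b₂ y * poissonDeriv b₂ q y) + b₁ y * poissonDeriv b₂ q y) *
      integratingFactor b₁ y = 0 := by
  have hint := integrable_mul_integratingFactor hbc₂ hb₂ hqc hq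
  refine integral_eq_zero_of_hasDerivAt_of_integrable
    (fun y => hasDerivAt_mul_integratingFactor hbc₁
      (hasDerivAt_poissonDeriv hbc₂ hqc hint hzero y))
    (integrable_deriv_poissonDeriv_mul_integratingFactor hγ hbc₁ hb₁ hbc₂ hb₂ hqc hq hzero) ?_
  exact integrable_mul_integratingFactor hbc₁ hb₁ (continuous_poissonDeriv hbc₂ hqc hint hzero)
    (isBigO_poissonDeriv hbc₂ hb₂ hqc hq hzero)

end TwoSided

section InvariantDensity

variable {a f h : ℝ → ℝ} {lm lp β C K γ : ℝ} {m : ℕ}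

lemma mul_piDen (a f : ℝ → ℝ) (c y : ℝ) :
    c * piDen a f y = c / a y * integratingFactor (fun s => f s / a s) y / Z1 a f := by
  simp only [piDen, rho1, integratingFactor]
  ring

lemma isBigO_div_of_le {l : Filter ℝ} {g : ℝ → ℝ} (hlm : 0 < lm) (ha : ∀ y, lm ≤ a y)
    (hh : h =O[l] g) : (fun y => h y / a y) =O[l] g := by
  refine (IsBigO.of_bound lm⁻¹ (.of_forall fun y => ?_)).trans hh
  rw [norm_div, div_eq_inv_mul, Real.norm_of_nonneg (hlm.trans_le (ha y)).le]
  gcongr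
  exact ha y

lemma isBigO_const_exp_abs (hγ : 0 ≤ γ) (c : ℝ) (l : Filter ℝ) :
    (fun _ => c) =O[l] fun y => Real.exp (γ * |y|) :=
  IsBigO.of_bound |c| <| .of_forall fun y => by
    rw [Real.norm_eq_abs, Real.norm_eq_abs, Real.abs_exp]
    exact le_mul_of_one_le_right (abs_nonneg c) (Real.one_le_exp (by positivity))

lemma integrable_mul_piDen (hac : Continuous a) (hfc : Continuous f) (hhc : Continuous h)
    (hlm : 0 < lm) (ha : ∀ y, lm ≤ a y) (hconf : IsConfining fun y => f y / a y)
    (hh : h =O[cocompact ℝ] fun y => Real.exp (γ * |y|)) :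
    Integrable fun y => h y * piDen a f y := by
  have ha₀ (y : ℝ) : a y ≠ 0 := (hlm.trans_le (ha y)).ne'
  simp only [mul_piDen]
  exact (integrable_mul_integratingFactor (hfc.div hac ha₀) hconf (hhc.div hac ha₀)
    (isBigO_div_of_le hlm ha hh)).div_const _

lemma integrable_rho1 (hac : Continuous a) (hfc : Continuous f)
    (hlm : 0 < lm) (ha : ∀ y, lm ≤ a y) (hconf : IsConfining fun y => f y / a y) :
    Integrable (rho1 a f) := by
  have ha₀ (y : ℝ) : a y ≠ 0 := (hlm.trans_le (ha y)).ne'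
  have hbc : Continuous fun y => f y / a y := hfc.div hac ha₀
  have hqc : Continuous fun y => 1 / a y := continuous_const.div hac ha₀
  change Integrable fun y => (a y)⁻¹ * integratingFactor (fun s => f s / a s) y
  simpa only [one_div] using integrable_mul_integratingFactor hbc hconf hqc
    (isBigO_div_of_le hlm ha (isBigO_const_exp_abs zero_le_one 1 _))

lemma Z1_pos (ha : ∀ y, 0 < a y) (hint : Integrable (rho1 a f)) : 0 < Z1 a f := by
  have hpos (y : ℝ) : 0 < rho1 a f y := mul_pos (inv_pos.2 (ha y)) (Real.exp_pos _)
  have hsupport : Function.support (rho1 a f) = univ := eq_univ_of_forall fun y => (hpos y).ne'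
  rw [Z1, integral_pos_iff_support_of_nonneg (fun y => (hpos y).le) hint, hsupport]
  simp

lemma integral_piDen (hZ : Z1 a f ≠ 0) : ∫ y, piDen a f y = 1 := by
  simp only [piDen]
  rw [integral_div, ← Z1, div_self hZ]

lemma integral_sub_hbar_mul_piDen (hZ : Z1 a f ≠ 0) (hrho : Integrable (rho1 a f))
    (hint : Integrable fun y => h y * piDen a f y) :
    ∫ y, (h y - hbar a f h) * piDen a f y = 0 := by
  have hpi : Integrable (piDen a f) := hrho.div_const _
  simp only [sub_mul]
  rw [integral_sub hint (hpi.const_mul _), integral_const_mul, integral_piDen hZ, mul_one, ← hbar,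
    sub_self]

lemma Fint_div_mul_piDen {y : ℝ} (ha : a y ≠ 0) (hZ : Z1 a f ≠ 0) :
    Fint a f h y / (a y * piDen a f y) =
      poissonDeriv (fun s => f s / a s) (fun s => (h s - hbar a f h) / a s) y := by
  simp only [Fint, poissonDeriv, mul_piDen, integral_div, div_self ha, one_mul]
  exact div_div_div_cancel_right₀ hZ _ _

lemma cross_generator_mul_piDen {a₁ a₂ f₁ f₂ : ℝ → ℝ} {y : ℝ} (ha₁ : a₁ y ≠ 0) (ha₂ : a₂ y ≠ 0)
    (hZ₂ : Z1 a₂ f₂ ≠ 0) :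
    (f₁ y * (Fint a₂ f₂ h y / (a₂ y * piDen a₂ f₂ y)) +
        a₁ y * ((h y - hbar a₂ f₂ h) / a₂ y -
          f₂ y * Fint a₂ f₂ h y / ((a₂ y) ^ 2 * piDen a₂ f₂ y))) * piDen a₁ f₁ y =
      (((h y - hbar a₂ f₂ h) / a₂ y - f₂ y / a₂ y * poissonDeriv (fun s => f₂ s / a₂ s)
            (fun s => (h s - hbar a₂ f₂ h) / a₂ s) y) +
          f₁ y / a₁ y * poissonDeriv (fun s => f₂ s / a₂ s)
            (fun s => (h s - hbar a₂ f₂ h) / a₂ s) y) *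
        integratingFactor (fun s => f₁ s / a₁ s) y / Z1 a₁ f₁ := by
  have hsecond : f₂ y * Fint a₂ f₂ h y / ((a₂ y) ^ 2 * piDen a₂ f₂ y) =
      f₂ y / a₂ y * (Fint a₂ f₂ h y / (a₂ y * piDen a₂ f₂ y)) := by
    rw [div_mul_div_comm, sq, mul_assoc]
  rw [hsecond, Fint_div_mul_piDen ha₂ hZ₂, mul_piDen]
  congr 2
  field_simp
  ring

lemma tendsto_div_atBot_of_dissipative (ha : ∀ y, 0 < a y) (halp : ∀ y, a y ≤ lp) (hβ : 0 < β)
    (hdis : ∀ y, f y * y ≤ -β * y ^ 2 + C) : Tendsto (fun y => f y / a y) atTop atBot := by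
  have hlp : 0 < lp := (ha 0).trans_le (halp 0)
  have hlin : Tendsto (fun y => (β * y - |C|) / lp) atTop atTop :=
    (tendsto_atTop_add_const_right _ _ (tendsto_id.const_mul_atTop hβ)).atTop_div_const hlp
  refine tendsto_neg_atTop_iff.1 (tendsto_atTop_mono' _ ?_ hlin)
  filter_upwards [eventually_ge_atTop 1, eventually_ge_atTop (|C| / β)] with y hy₁ hy
  have hf : β * y - |C| ≤ -f y := by
    refine le_of_mul_le_mul_right ?_ (one_pos.trans_le hy₁)
    nlinarith [hdis y, le_abs_self C, abs_nonneg C]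
  have hnonneg : 0 ≤ β * y - |C| := by linarith [(div_le_iff₀' hβ).1 hy]
  rw [← neg_div]
  exact div_le_div₀ (hnonneg.trans hf) hf (ha y) (halp y)

lemma isConfining_div_of_dissipative (ha : ∀ y, 0 < a y) (halp : ∀ y, a y ≤ lp) (hβ : 0 < β)
    (hdis : ∀ y, f y * y ≤ -β * y ^ 2 + C) : IsConfining fun y => f y / a y where
  tendsto_atTop := tendsto_div_atBot_of_dissipative ha halp hβ hdis
  tendsto_atBot := by
    have hneg := tendsto_div_atBot_of_dissipative (a := fun y => a (-y)) (f := fun y => -f (-y))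
      (C := C) (fun y => ha (-y)) (fun y => halp (-y)) hβ fun y => by
        linarith [hdis (-y), neg_sq y]
    simpa only [Function.comp_def, neg_div, neg_neg] using
      tendsto_neg_atBot_atTop.comp (hneg.comp tendsto_neg_atBot_atTop)

lemma isBigO_exp_abs_of_abs_le_pow (hh : ∀ y, |h y| ≤ K * (1 + |y| ^ m)) :
    h =O[cocompact ℝ] fun y => Real.exp (1 * |y|) := by
  have hpow : (fun y : ℝ => |y| ^ m) =O[cocompact ℝ] fun y => Real.exp (1 * |y|) := by
    simpa only [Function.comp_def, one_mul, Real.norm_eq_abs] using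
      (Real.isLittleO_pow_exp_atTop (n := m)).isBigO.comp_tendsto
        (tendsto_norm_cocompact_atTop (E := ℝ))
  refine IsBigO.trans (IsBigO.of_bound' (.of_forall fun y => ?_))
    (((isBigO_const_exp_abs zero_le_one 1 _).add hpow).const_mul_left K)
  exact (hh y).trans (le_abs_self _)

end InvariantDensity

theorem one_dim_cross_generator_integrates_to_zero_general {a₁ a₂ f₁ f₂ h : ℝ → ℝ} {lm γ : ℝ}
    (ha₁c : Continuous a₁) (ha₂c : Continuous a₂)
    (hf₁c : Continuous f₁) (hf₂c : Continuous f₂) (hhc : Continuous h)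
    (hlm : 0 < lm) (ha₁ : ∀ y, lm ≤ a₁ y) (ha₂ : ∀ y, lm ≤ a₂ y)
    (hconf₁ : IsConfining fun y => f₁ y / a₁ y) (hconf₂ : IsConfining fun y => f₂ y / a₂ y)
    (hγ : 0 ≤ γ) (hh : h =O[cocompact ℝ] fun y => Real.exp (γ * |y|)) :
    Integrable (fun y => (f₁ y * (Fint a₂ f₂ h y / (a₂ y * piDen a₂ f₂ y)) +
        a₁ y * ((h y - hbar a₂ f₂ h) / a₂ y -
          f₂ y * Fint a₂ f₂ h y / ((a₂ y) ^ 2 * piDen a₂ f₂ y))) * piDen a₁ f₁ y) ∧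
      ∫ y, (f₁ y * (Fint a₂ f₂ h y / (a₂ y * piDen a₂ f₂ y)) +
        a₁ y * ((h y - hbar a₂ f₂ h) / a₂ y -
          f₂ y * Fint a₂ f₂ h y / ((a₂ y) ^ 2 * piDen a₂ f₂ y))) * piDen a₁ f₁ y = 0 := by
  have ha₁₀ (y : ℝ) : a₁ y ≠ 0 := (hlm.trans_le (ha₁ y)).ne'
  have ha₂₀ (y : ℝ) : a₂ y ≠ 0 := (hlm.trans_le (ha₂ y)).ne'
  have hrho := integrable_rho1 ha₂c hf₂c hlm ha₂ hconf₂
  have hZ : Z1 a₂ f₂ ≠ 0 := (Z1_pos (fun y => hlm.trans_le (ha₂ y)) hrho).ne'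
  have hzero := integral_sub_hbar_mul_piDen hZ hrho
    (integrable_mul_piDen ha₂c hf₂c hhc hlm ha₂ hconf₂ hh)
  simp only [mul_piDen, integral_div, div_eq_zero_iff, hZ, or_false] at hzero
  have hbc₁ : Continuous fun y => f₁ y / a₁ y := hf₁c.div ha₁c ha₁₀
  have hbc₂ : Continuous fun y => f₂ y / a₂ y := hf₂c.div ha₂c ha₂₀
  have hqc : Continuous fun y => (h y - hbar a₂ f₂ h) / a₂ y :=
    (hhc.sub continuous_const).div ha₂c ha₂₀
  have hq := isBigO_div_of_le hlm ha₂ (hh.sub (isBigO_const_exp_abs hγ (hbar a₂ f₂ h) _))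
  simp only [cross_generator_mul_piDen (ha₁₀ _) (ha₂₀ _) hZ]
  refine ⟨(integrable_deriv_poissonDeriv_mul_integratingFactor hγ hbc₁ hconf₁
    hbc₂ hconf₂ hqc hq hzero).div_const _, ?_⟩
  rw [integral_div, integral_deriv_poissonDeriv_mul_integratingFactor hγ hbc₁
    hconf₁ hbc₂ hconf₂ hqc hq hzero, zero_div]

/-- the generator with the first pair of coefficients, applied to the
explicit Poisson solution associated with the second pair, integrates to zero against
the invariant density of the first pair. -/
theorem one_dim_cross_generator_integrates_to_zero
    (a₁ a₂ f₁ f₂ h : ℝ → ℝ) (lm lp β C K : ℝ) (m : ℕ)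
    (ha₁c : Continuous a₁) (ha₂c : Continuous a₂)
    (hf₁c : Continuous f₁) (hf₂c : Continuous f₂) (hhc : Continuous h)
    (hlm : 0 < lm)
    (hbnd₁ : ∀ y, lm ≤ a₁ y ∧ a₁ y ≤ lp) (hbnd₂ : ∀ y, lm ≤ a₂ y ∧ a₂ y ≤ lp)
    (hβ : 0 < β) (hC : 0 < C)
    (hdis₁ : ∀ y, f₁ y * y ≤ -β * y ^ 2 + C) (hdis₂ : ∀ y, f₂ y * y ≤ -β * y ^ 2 + C)
    (hh : ∀ y, |h y| ≤ K * (1 + |y| ^ m)) :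
    (∫ y, (f₁ y * (Fint a₂ f₂ h y / (a₂ y * piDen a₂ f₂ y)) +
        a₁ y * ((h y - hbar a₂ f₂ h) / a₂ y -
          f₂ y * Fint a₂ f₂ h y / ((a₂ y) ^ 2 * piDen a₂ f₂ y))) * piDen a₁ f₁ y) = 0 :=
  have ha₁ (y : ℝ) : 0 < a₁ y := hlm.trans_le (hbnd₁ y).1
  have ha₂ (y : ℝ) : 0 < a₂ y := hlm.trans_le (hbnd₂ y).1
  (one_dim_cross_generator_integrates_to_zero_general ha₁c ha₂c hf₁c hf₂c hhc hlm
    (fun y => (hbnd₁ y).1) (fun y => (hbnd₂ y).1)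
    (isConfining_div_of_dissipative ha₁ (fun y => (hbnd₁ y).2) hβ hdis₁)
    (isConfining_div_of_dissipative ha₂ (fun y => (hbnd₂ y).2) hβ hdis₂)
    zero_le_one (isBigO_exp_abs_of_abs_le_pow hh)).2

end
end

section
/- For i = 1, 2, let (f_i, a_i, ρ_i, Z_i, π_i) be as in the two-parameter one-dimensional explicit invariant density setup, let h₁, h₂ : ℝ → ℝ be continuous with |h_i(y)| ≤ K(1+|y|^m), set h̄₂ = ∫_ℝ h₂ π₂ dy and F(y) = ∫_{−∞}^y (h₂(s) − h̄₂)π₂(s) ds, and let v be the explicit Poisson solution for (f₂, a₂) with data h₂, i.e. v'(y) = F(y)/(a₂(y)π₂(y)) and v''(y) = (h₂(y) − h̄₂)/a₂(y) − f₂(y)F(y)/(a₂(y)²π₂(y)). Then ∫_ℝ h₁(y)π₁(y) dy − ∫_ℝ h₂(y)π₂(y) dy = ∫_ℝ [ h₁(y) − h₂(y) − ( (f₁(y) − f₂(y)) v'(y) + (a₁(y) − a₂(y)) v''(y) ) ] π₁(y) dy. -/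
open MeasureTheory

noncomputable section

/-!
Write `r_i = f_i / a_i`, `E_i = exp (∫₀^y r_i) = a_i ρ_i` and `L_i = a_i ∂² + f_i ∂`. Since
`L₂ v = h₂ - h̄₂`, the bracket on the right-hand side is `h₁ - h̄₂ - L₁ v`, and
`(L₁ v) ρ₁ = (v' E₁)'` is an exact derivative. So the theorem says that the flux `v' E₁` vanishes
at `±∞` and has an integrable derivative.

Near `+∞`, `-v' = (∫_y^∞ g E₂) / E₂` with `g = (h₂ - h̄₂) / a₂` is at most `e^{ky}` times the Mills
ratio `M` of `e^{ky} E₂`, and `M ≤ 1` eventually. The delicate terms of the derivative are those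
with a factor `r_i`, since `f_i` may grow arbitrarily fast inwards. For `r₁ v' E₁` one uses that
`(r₁ + k) e^{ky} E₁` is the derivative of `e^{ky} E₁`. For `r₂ v' E₁` one uses that
`M' = -1 - (r₂ + k) M`, which makes `(r₂ + k + 1) M e^{-y}` the derivative of the bounded function
`(1 - M) e^{-y}`. Both derivatives are of one sign near `+∞`, hence integrable. Since
`∫ g E₂ = 0`, reflection carries all of this over to `-∞`.
-/

section

open Filter Topology Set Asymptotics

/-- The integrating factor `exp(∫₀^y r)` of a logarithmic drift `r`; for `r = f / a` it is the
numerator of the density `ρ`. -/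
def expPrimitive (r : ℝ → ℝ) (y : ℝ) : ℝ := Real.exp (∫ s in (0 : ℝ)..y, r s)

/-- The solution `u = (∫_y^∞ g e^{∫₀ r}) / e^{∫₀^y r}` of `u' = -g - r u` that is selected by its
behaviour at `+∞`; for `g = 1` it is the Mills ratio of the density `e^{∫₀ r}`. -/
def tailRatio (r g : ℝ → ℝ) (y : ℝ) : ℝ :=
  (∫ s in Ioi y, g s * expPrimitive r s) / expPrimitive r y

lemma expPrimitive_pos (r : ℝ → ℝ) (y : ℝ) : 0 < expPrimitive r y := Real.exp_pos _

lemma expPrimitive_comp_neg (r : ℝ → ℝ) (y : ℝ) :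
    expPrimitive (fun s => -r (-s)) y = expPrimitive r (-y) := by
  simp only [expPrimitive, intervalIntegral.integral_neg, intervalIntegral.integral_comp_neg,
    neg_zero, intervalIntegral.integral_symm (-y) 0]

lemma expPrimitive_add_const {r : ℝ → ℝ} (hr : Continuous r) (k y : ℝ) :
    expPrimitive (fun s => r s + k) y = Real.exp (k * y) * expPrimitive r y := by
  rw [expPrimitive, intervalIntegral.integral_add (hr.intervalIntegrable _ _)
    intervalIntegrable_const, intervalIntegral.integral_const, Real.exp_add, mul_comm,
    sub_zero, smul_eq_mul, mul_comm y, expPrimitive]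

lemma hasDerivAt_expPrimitive {r : ℝ → ℝ} (hr : Continuous r) (y : ℝ) :
    HasDerivAt (expPrimitive r) (r y * expPrimitive r y) y := by
  rw [mul_comm]
  exact (hr.integral_hasStrictDerivAt 0 y).hasDerivAt.exp

@[fun_prop]
lemma continuous_expPrimitive {r : ℝ → ℝ} (hr : Continuous r) : Continuous (expPrimitive r) :=
  continuous_iff_continuousAt.2 fun y => (hasDerivAt_expPrimitive hr y).continuousAt

lemma isBigO_add_const_of_tendsto_atBot {r : ℝ → ℝ} {l : Filter ℝ}
    (hlim : Tendsto r l atBot) (c : ℝ) : r =O[l] fun y => r y + c := by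
  have hconst : (fun _ => c) =o[l] r :=
    isLittleO_const_left.2 (Or.inr (tendsto_abs_atBot_atTop.comp hlim))
  exact hconst.right_isBigO_add'

lemma integrableAtFilter_atTop_deriv_of_nonneg {φ φ' : ℝ → ℝ} {c : ℝ}
    (hderiv : ∀ᶠ y in atTop, HasDerivAt φ (φ' y) y) (hnonneg : ∀ᶠ y in atTop, 0 ≤ φ' y)
    (hlim : Tendsto φ atTop (𝓝 c)) : IntegrableAtFilter φ' atTop := by
  obtain ⟨R, hR⟩ := eventually_atTop.1 (hderiv.and hnonneg)
  exact ⟨Ioi R, Ioi_mem_atTop R, integrableOn_Ioi_deriv_of_nonneg'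
    (fun y hy => (hR y hy).1) (fun y hy => (hR y hy.le).2) hlim⟩

lemma integrableAtFilter_atTop_iff_integrableOn_Ioi {φ : ℝ → ℝ} (hφ : Continuous φ) (y : ℝ) :
    IntegrableAtFilter φ atTop ↔ IntegrableOn φ (Ioi y) := by
  rw [← integrableOn_Ici_iff_integrableOn_Ioi, integrableOn_Ici_iff_integrableAtFilter_atTop,
    and_iff_left (hφ.locallyIntegrable.locallyIntegrableOn _)]

lemma integrableAtFilter_atBot_iff_comp_neg {φ : ℝ → ℝ} :
    IntegrableAtFilter φ atBot ↔ IntegrableAtFilter (fun y => φ (-y)) atTop := by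
  have h := (Homeomorph.neg ℝ).measurableEmbedding.integrableAtFilter_map_iff (f := φ)
    (l := atTop) (μ := volume)
  simpa [Function.comp_def, Measure.map_neg_eq_self] using h

section AtTop

variable {r g u : ℝ → ℝ} {k : ℝ}

lemma isBigO_expPrimitive_atTop (hr : Continuous r) (hlim : Tendsto r atTop atBot) (k : ℝ) :
    expPrimitive r =O[atTop] fun y => Real.exp (-k * y) := by
  obtain ⟨R, hR⟩ := eventually_atTop.1 (hlim.eventually_le_atBot (-k))
  have hanti : AntitoneOn (expPrimitive fun s => r s + k) (Ici R) := by
    have hderiv := hasDerivAt_expPrimitive (hr.add_const k)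
    refine antitoneOn_of_hasDerivWithinAt_nonpos (convex_Ici R)
      (continuous_expPrimitive (hr.add_const k)).continuousOn
      (fun y _ => (hderiv y).hasDerivWithinAt) fun y hy => ?_
    rw [interior_Ici] at hy
    exact mul_nonpos_of_nonpos_of_nonneg (by linarith [hR y hy.le]) (expPrimitive_pos _ y).le
  refine .of_bound (expPrimitive (fun s => r s + k) R) ?_
  filter_upwards [eventually_ge_atTop R] with y hy
  calc ‖expPrimitive r y‖ = expPrimitive (fun s => r s + k) y * Real.exp (-k * y) := by
        rw [expPrimitive_add_const hr, mul_right_comm, ← Real.exp_add, neg_mul, add_neg_cancel,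
          Real.exp_zero, one_mul, Real.norm_of_nonneg (expPrimitive_pos r y).le]
    _ ≤ expPrimitive (fun s => r s + k) R * ‖Real.exp (-k * y)‖ := by
        rw [Real.norm_of_nonneg (Real.exp_pos _).le]
        gcongr
        exact hanti self_mem_Ici hy hy

lemma isBigO_mul_expPrimitive_atTop (hr : Continuous r) (hlim : Tendsto r atTop atBot)
    (hg : g =O[atTop] fun y => Real.exp (k * y)) :
    (fun y => g y * expPrimitive r y) =O[atTop] fun y => Real.exp (-1 * y) := by
  refine (hg.mul (isBigO_expPrimitive_atTop hr hlim (k + 1))).congr_right fun y => ?_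
  rw [← Real.exp_add]
  ring_nf

lemma tendsto_mul_expPrimitive_atTop (hr : Continuous r) (hlim : Tendsto r atTop atBot)
    (hg : g =O[atTop] fun y => Real.exp (k * y)) :
    Tendsto (fun y => g y * expPrimitive r y) atTop (𝓝 0) :=
  (isBigO_mul_expPrimitive_atTop hr hlim hg).trans_tendsto <| by
    simpa only [neg_one_mul] using Real.tendsto_exp_neg_atTop_nhds_zero

lemma integrableAtFilter_mul_expPrimitive (hr : Continuous r) (hlim : Tendsto r atTop atBot)
    (hgc : Continuous g) (hg : g =O[atTop] fun y => Real.exp (k * y)) :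
    IntegrableAtFilter (fun y => g y * expPrimitive r y) atTop :=
  have hc : Continuous fun y => g y * expPrimitive r y := by fun_prop
  (integrableAtFilter_atTop_iff_integrableOn_Ioi hc 0).2 <|
    integrable_of_isBigO_exp_neg one_pos hc.continuousOn
      (isBigO_mul_expPrimitive_atTop hr hlim hg)

lemma tendsto_expPrimitive_atTop (hr : Continuous r) (hlim : Tendsto r atTop atBot) :
    Tendsto (expPrimitive r) atTop (𝓝 0) :=
  (isBigO_expPrimitive_atTop hr hlim 1).trans_tendsto <| by
    simpa only [neg_one_mul] using Real.tendsto_exp_neg_atTop_nhds_zero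

lemma integrableAtFilter_drift_mul_expPrimitive (hr : Continuous r)
    (hlim : Tendsto r atTop atBot) :
    IntegrableAtFilter (fun y => r y * expPrimitive r y) atTop := by
  rw [← MeasureTheory.integrableAtFilter_neg_iff]
  refine integrableAtFilter_atTop_deriv_of_nonneg
    (.of_forall fun y => (hasDerivAt_expPrimitive hr y).neg) ?_
    (tendsto_expPrimitive_atTop hr hlim).neg
  filter_upwards [hlim.eventually_le_atBot 0] with y hy
  exact neg_nonneg.2 (mul_nonpos_of_nonpos_of_nonneg hy (expPrimitive_pos r y).le)

lemma integrableAtFilter_drift_mul_mul_expPrimitive (hr : Continuous r)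
    (hlim : Tendsto r atTop atBot) (huc : Continuous u)
    (hu : u =O[atTop] fun y => Real.exp (k * y)) :
    IntegrableAtFilter (fun y => r y * u y * expPrimitive r y) atTop := by
  have hc : Continuous fun y => r y * u y * expPrimitive r y := by fun_prop
  refine IsBigO.integrableAtFilter ?_ (hc.stronglyMeasurableAtFilter _ _)
    (integrableAtFilter_drift_mul_expPrimitive (hr.add_const k)
      (tendsto_atBot_add_const_right _ k hlim))
  refine (((isBigO_add_const_of_tendsto_atBot hlim k).mul hu).mul (isBigO_refl _ _)).congr_right
    fun y => ?_
  rw [expPrimitive_add_const hr, mul_assoc]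

lemma hasDerivAt_tailRatio (hr : Continuous r) (hgc : Continuous g)
    (hint : IntegrableAtFilter (fun y => g y * expPrimitive r y) atTop) (y : ℝ) :
    HasDerivAt (tailRatio r g) (-g y - r y * tailRatio r g y) y := by
  have hc : Continuous fun y => g y * expPrimitive r y := by fun_prop
  have htail : ∀ z, ∫ s in Ioi z, g s * expPrimitive r s =
      (∫ s in Ioi 0, g s * expPrimitive r s) - ∫ s in (0 : ℝ)..z, g s * expPrimitive r s := by
    intro z
    have hIoi := integrableAtFilter_atTop_iff_integrableOn_Ioi hc
    rw [← intervalIntegral.integral_Ioi_sub_Ioi' ((hIoi 0).1 hint) ((hIoi z).1 hint),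
      sub_sub_cancel]
  have hnum : HasDerivAt (fun z => ∫ s in Ioi z, g s * expPrimitive r s)
      (-(g y * expPrimitive r y)) y :=
    ((hc.integral_hasStrictDerivAt 0 y).hasDerivAt.const_sub _).congr_of_eventuallyEq
      (.of_forall htail)
  have hne := (expPrimitive_pos r y).ne'
  refine (hnum.div (hasDerivAt_expPrimitive hr y) hne).congr_deriv ?_
  rw [tailRatio]
  field_simp

lemma continuous_tailRatio (hr : Continuous r) (hgc : Continuous g)
    (hint : IntegrableAtFilter (fun y => g y * expPrimitive r y) atTop) :
    Continuous (tailRatio r g) :=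
  continuous_iff_continuousAt.2 fun y => (hasDerivAt_tailRatio hr hgc hint y).continuousAt

lemma tailRatio_one (r : ℝ → ℝ) (y : ℝ) :
    tailRatio r 1 y = (∫ s in Ioi y, expPrimitive r s) / expPrimitive r y := by
  simp only [tailRatio, Pi.one_apply, one_mul]

lemma tailRatio_one_nonneg (r : ℝ → ℝ) (y : ℝ) : 0 ≤ tailRatio r 1 y := by
  rw [tailRatio_one]
  exact div_nonneg (setIntegral_nonneg measurableSet_Ioi fun s _ => (expPrimitive_pos r s).le)
    (expPrimitive_pos r y).le

lemma integrableOn_expPrimitive_Ioi (hr : Continuous r) (hlim : Tendsto r atTop atBot) (y : ℝ) :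
    IntegrableOn (expPrimitive r) (Ioi y) :=
  integrable_of_isBigO_exp_neg one_pos (continuous_expPrimitive hr).continuousOn
    (isBigO_expPrimitive_atTop hr hlim 1)

lemma eventually_tailRatio_one_le_one (hr : Continuous r) (hlim : Tendsto r atTop atBot) :
    ∀ᶠ y in atTop, tailRatio r 1 y ≤ 1 := by
  obtain ⟨R, hR⟩ := eventually_atTop.1 (hlim.eventually_le_atBot (-1))
  filter_upwards [eventually_ge_atTop R] with y hy
  have hdrift : IntegrableOn (fun s => r s * expPrimitive r s) (Ioi y) :=
    (integrableAtFilter_atTop_iff_integrableOn_Ioi (by fun_prop) y).1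
      (integrableAtFilter_drift_mul_expPrimitive hr hlim)
  rw [tailRatio_one, div_le_one (expPrimitive_pos r y)]
  calc ∫ s in Ioi y, expPrimitive r s
      ≤ ∫ s in Ioi y, -(r s * expPrimitive r s) := by
        refine setIntegral_mono_on (integrableOn_expPrimitive_Ioi hr hlim y) hdrift.neg
          measurableSet_Ioi fun s hs => ?_
        have hrs : r s ≤ -1 := hR s (hy.trans hs.le)
        nlinarith [expPrimitive_pos r s]
    _ = expPrimitive r y := by
        rw [integral_neg, integral_Ioi_of_hasDerivAt_of_tendsto'
          (fun s _ => hasDerivAt_expPrimitive hr s) hdrift (tendsto_expPrimitive_atTop hr hlim),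
          zero_sub, neg_neg]

lemma integrableAtFilter_drift_mul_tailRatio_one (hr : Continuous r)
    (hlim : Tendsto r atTop atBot) :
    IntegrableAtFilter (fun y => r y * tailRatio r 1 y * Real.exp (-y)) atTop := by
  have hint : IntegrableAtFilter (fun y => (1 : ℝ → ℝ) y * expPrimitive r y) atTop :=
    ⟨Ioi 0, Ioi_mem_atTop 0, by
      simpa only [Pi.one_apply, one_mul] using integrableOn_expPrimitive_Ioi hr hlim 0⟩
  have hu := continuous_tailRatio hr continuous_one hint
  have hexp : ∀ y, HasDerivAt (fun y : ℝ => Real.exp (-y)) (-Real.exp (-y)) y := fun y => by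
    simpa using (hasDerivAt_neg y).exp
  have hderiv : ∀ y, HasDerivAt (fun y => (tailRatio r 1 y - 1) * Real.exp (-y))
      (-((r y + 1) * tailRatio r 1 y * Real.exp (-y))) y := fun y => by
    refine (((hasDerivAt_tailRatio hr continuous_one hint y).sub_const 1).mul
      (hexp y)).congr_deriv ?_
    rw [Pi.one_apply]
    ring
  have hzero : Tendsto (fun y => (tailRatio r 1 y - 1) * Real.exp (-y)) atTop (𝓝 0) := by
    refine squeeze_zero_norm' ?_ Real.tendsto_exp_neg_atTop_nhds_zero
    filter_upwards [eventually_tailRatio_one_le_one hr hlim] with y hy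
    rw [norm_mul, Real.norm_of_nonneg (Real.exp_pos _).le, Real.norm_eq_abs]
    have := tailRatio_one_nonneg r y
    exact mul_le_of_le_one_left (Real.exp_pos _).le (abs_le.2 ⟨by linarith, by linarith⟩)
  have hshift : IntegrableAtFilter
      (fun y => (r y + 1) * tailRatio r 1 y * Real.exp (-y)) atTop := by
    rw [← MeasureTheory.integrableAtFilter_neg_iff]
    refine integrableAtFilter_atTop_deriv_of_nonneg (.of_forall hderiv) ?_ hzero
    filter_upwards [hlim.eventually_le_atBot (-1)] with y hy
    exact neg_nonneg.2 (mul_nonpos_of_nonpos_of_nonneg (mul_nonpos_of_nonpos_of_nonneg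
      (by linarith) (tailRatio_one_nonneg r y)) (Real.exp_pos _).le)
  have hc : Continuous fun y => r y * tailRatio r 1 y * Real.exp (-y) := by fun_prop
  exact (((isBigO_add_const_of_tendsto_atBot hlim 1).mul (isBigO_refl _ _)).mul
    (isBigO_refl _ _)).integrableAtFilter (hc.stronglyMeasurableAtFilter _ _) hshift

lemma isBigO_tailRatio_atTop (hr : Continuous r) (hlim : Tendsto r atTop atBot)
    (hg : g =O[atTop] fun y => Real.exp (k * y)) :
    tailRatio r g =O[atTop] fun y => Real.exp (k * y) * tailRatio (fun s => r s + k) 1 y := by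
  obtain ⟨A, hA⟩ := hg.bound
  obtain ⟨R, hR⟩ := eventually_atTop.1 hA
  refine IsBigO.of_bound A ?_
  filter_upwards [eventually_ge_atTop R] with y hy
  have hnum : ‖∫ s in Ioi y, g s * expPrimitive r s‖ ≤
      A * ∫ s in Ioi y, expPrimitive (fun s => r s + k) s := by
    rw [← integral_const_mul]
    refine norm_integral_le_of_norm_le
      ((integrableOn_expPrimitive_Ioi (hr.add_const k)
        (tendsto_atBot_add_const_right _ k hlim) y).const_mul A) <|
      ae_restrict_of_forall_mem measurableSet_Ioi fun s hs => ?_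
    rw [norm_mul, Real.norm_of_nonneg (expPrimitive_pos r s).le,
      expPrimitive_add_const hr, ← mul_assoc]
    have hgs := hR s (hy.trans hs.le)
    rw [Real.norm_of_nonneg (Real.exp_pos _).le] at hgs
    exact mul_le_mul_of_nonneg_right hgs (expPrimitive_pos r s).le
  rw [tailRatio, norm_div, Real.norm_of_nonneg (expPrimitive_pos r y).le,
    div_le_iff₀ (expPrimitive_pos r y), Real.norm_of_nonneg
      (mul_nonneg (Real.exp_pos _).le (tailRatio_one_nonneg _ y))]
  refine hnum.trans_eq ?_
  rw [tailRatio_one, expPrimitive_add_const hr]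
  have := (expPrimitive_pos r y).ne'
  field_simp

lemma isBigO_tailRatio_exp_atTop (hr : Continuous r) (hlim : Tendsto r atTop atBot)
    (hg : g =O[atTop] fun y => Real.exp (k * y)) :
    tailRatio r g =O[atTop] fun y => Real.exp (k * y) := by
  have hmills : tailRatio (fun s => r s + k) 1 =O[atTop] fun _ => (1 : ℝ) := by
    refine .of_bound 1 ?_
    filter_upwards [eventually_tailRatio_one_le_one (hr.add_const k)
      (tendsto_atBot_add_const_right _ k hlim)] with y hy
    rwa [norm_one, one_mul, Real.norm_of_nonneg (tailRatio_one_nonneg _ y)]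
  refine (isBigO_tailRatio_atTop hr hlim hg).trans ?_
  simpa using (isBigO_refl (fun y => Real.exp (k * y)) atTop).mul hmills

lemma integrableAtFilter_drift_mul_tailRatio_mul_expPrimitive {r' : ℝ → ℝ} (hr : Continuous r)
    (hlim : Tendsto r atTop atBot) (hr' : Continuous r') (hlim' : Tendsto r' atTop atBot)
    (hgc : Continuous g) (hg : g =O[atTop] fun y => Real.exp (k * y)) :
    IntegrableAtFilter (fun y => r y * tailRatio r g y * expPrimitive r' y) atTop := by
  have huc := continuous_tailRatio hr hgc (integrableAtFilter_mul_expPrimitive hr hlim hgc hg)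
  have hc : Continuous fun y => r y * tailRatio r g y * expPrimitive r' y := by fun_prop
  refine IsBigO.integrableAtFilter ?_ (hc.stronglyMeasurableAtFilter _ _)
    (integrableAtFilter_drift_mul_tailRatio_one (hr.add_const k)
      (tendsto_atBot_add_const_right _ k hlim))
  refine (((isBigO_add_const_of_tendsto_atBot hlim k).mul (isBigO_tailRatio_atTop hr hlim hg)).mul
    (isBigO_expPrimitive_atTop hr' hlim' (k + 1))).congr_right fun y => ?_
  have hexp : Real.exp (-y) = Real.exp (k * y) * Real.exp (-(k + 1) * y) := by
    rw [← Real.exp_add]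
    ring_nf
  rw [hexp]
  ring

lemma integrableAtFilter_deriv_tailRatio_mul_expPrimitive {r' : ℝ → ℝ} (hr : Continuous r)
    (hlim : Tendsto r atTop atBot) (hr' : Continuous r') (hlim' : Tendsto r' atTop atBot)
    (hgc : Continuous g) (hg : g =O[atTop] fun y => Real.exp (k * y)) :
    IntegrableAtFilter
      (fun y => ((r' y - r y) * tailRatio r g y - g y) * expPrimitive r' y) atTop := by
  have huc := continuous_tailRatio hr hgc (integrableAtFilter_mul_expPrimitive hr hlim hgc hg)
  have hdrift' := integrableAtFilter_drift_mul_mul_expPrimitive hr' hlim' huc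
    (isBigO_tailRatio_exp_atTop hr hlim hg)
  have hdrift := integrableAtFilter_drift_mul_tailRatio_mul_expPrimitive hr hlim hr' hlim' hgc hg
  have hdata := integrableAtFilter_mul_expPrimitive hr' hlim' hgc hg
  convert (hdrift'.sub hdrift).sub hdata using 2 with y
  simp only [Pi.sub_apply]
  ring

end AtTop

/-- A continuous logarithmic drift `r` pointing inwards with unbounded strength at both ends, so
that `e^{∫₀ r}` decays faster than every exponential. -/
structure IsConfining_s12 (r : ℝ → ℝ) : Prop where
  continuous : Continuous r
  tendsto_atTop : Tendsto r atTop atBot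
  tendsto_atBot : Tendsto r atBot atTop

/-- At most exponential growth at infinity, the class of data that every confining density
integrates. -/
def HasExpGrowth (g : ℝ → ℝ) : Prop := ∃ k : ℝ, g =O[cocompact ℝ] fun y => Real.exp (k * |y|)

lemma IsConfining_s12.comp_neg {r : ℝ → ℝ} (hr : IsConfining_s12 r) : IsConfining_s12 fun y => -r (-y) where
  continuous := (hr.continuous.comp continuous_neg).neg
  tendsto_atTop :=
    tendsto_neg_atTop_atBot.comp (hr.tendsto_atBot.comp tendsto_neg_atTop_atBot)
  tendsto_atBot :=
    tendsto_neg_atBot_atTop.comp (hr.tendsto_atTop.comp tendsto_neg_atBot_atTop)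

namespace HasExpGrowth

variable {g h : ℝ → ℝ}

lemma of_polynomial_bound {K : ℝ} {m : ℕ} (hg : ∀ y, |g y| ≤ K * (1 + |y| ^ m)) :
    HasExpGrowth g := by
  have hpow : ∀ n : ℕ, (fun y : ℝ => |y| ^ n) =O[cocompact ℝ] fun y => Real.exp |y| := fun n =>
    (Real.isLittleO_pow_exp_atTop.comp_tendsto (tendsto_norm_cocompact_atTop (E := ℝ))).isBigO
  have hbound : g =O[cocompact ℝ] fun y => 1 + |y| ^ m := .of_bound K <| .of_forall fun y => by
    rw [Real.norm_eq_abs, Real.norm_of_nonneg (by positivity)]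
    exact hg y
  refine ⟨1, hbound.trans ?_⟩
  simpa only [one_mul, pow_zero] using (hpow 0).add (hpow m)

lemma const (c : ℝ) : HasExpGrowth fun _ => c :=
  of_polynomial_bound (K := |c|) (m := 0) fun _ => by linarith [abs_nonneg c]

lemma sub (hg : HasExpGrowth g) (hh : HasExpGrowth h) : HasExpGrowth fun y => g y - h y := by
  obtain ⟨k, hk⟩ := hg
  obtain ⟨l, hl⟩ := hh
  have hmono : ∀ {c : ℝ}, c ≤ max k l →
      (fun y : ℝ => Real.exp (c * |y|)) =O[cocompact ℝ] fun y => Real.exp (max k l * |y|) :=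
    fun {c} hc => .of_norm_le fun y => by
      rw [Real.norm_of_nonneg (Real.exp_pos _).le]
      gcongr
  exact ⟨max k l, (hk.trans (hmono (le_max_left k l))).sub (hl.trans (hmono (le_max_right k l)))⟩

lemma mul (hg : HasExpGrowth g) (hh : HasExpGrowth h) : HasExpGrowth fun y => g y * h y := by
  obtain ⟨k, hk⟩ := hg
  obtain ⟨l, hl⟩ := hh
  refine ⟨k + l, (hk.mul hl).congr_right fun y => ?_⟩
  rw [← Real.exp_add, add_mul]

lemma comp_neg (hg : HasExpGrowth g) : HasExpGrowth fun y => g (-y) := by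
  obtain ⟨k, hk⟩ := hg
  refine ⟨k, (hk.comp_tendsto (Homeomorph.neg ℝ).isClosedEmbedding.tendsto_cocompact).congr_right
    fun y => ?_⟩
  simp

lemma exists_isBigO_atTop (hg : HasExpGrowth g) :
    ∃ k : ℝ, g =O[atTop] fun y => Real.exp (k * y) := by
  obtain ⟨k, hk⟩ := hg
  refine ⟨k, (hk.mono atTop_le_cocompact).congr' .rfl ?_⟩
  filter_upwards [eventually_ge_atTop 0] with y hy
  rw [abs_of_nonneg hy]

end HasExpGrowth

lemma tailRatio_comp_neg {r g : ℝ → ℝ} (hint : Integrable fun y => g y * expPrimitive r y)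
    (hzero : ∫ y, g y * expPrimitive r y = 0) (y : ℝ) :
    tailRatio (fun s => -r (-s)) (fun s => g (-s)) y = -tailRatio r g (-y) := by
  have hsplit := intervalIntegral.integral_Iic_add_Ioi (b := -y) hint.integrableOn
    hint.integrableOn
  simp only [tailRatio, expPrimitive_comp_neg]
  rw [integral_comp_neg_Ioi y fun s => g s * expPrimitive r s, ← neg_div]
  congr 1
  linarith

namespace IsConfining_s12

variable {r r' g : ℝ → ℝ}

lemma integrable_mul_expPrimitive (hr : IsConfining_s12 r) (hgc : Continuous g)
    (hg : HasExpGrowth g) : Integrable fun y => g y * expPrimitive r y := by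
  have hc : Continuous fun y => g y * expPrimitive r y :=
    hgc.mul (continuous_expPrimitive hr.continuous)
  obtain ⟨_, hTop⟩ := hg.exists_isBigO_atTop
  obtain ⟨_, hBot⟩ := hg.comp_neg.exists_isBigO_atTop
  refine integrable_iff_integrableAtFilter_atBot_atTop.2
    ⟨⟨integrableAtFilter_atBot_iff_comp_neg.2 ?_, ?_⟩, hc.locallyIntegrable⟩
  · simpa only [expPrimitive_comp_neg] using integrableAtFilter_mul_expPrimitive
      hr.comp_neg.continuous hr.comp_neg.tendsto_atTop (hgc.comp' continuous_neg) hBot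
  · exact integrableAtFilter_mul_expPrimitive hr.continuous hr.tendsto_atTop hgc hTop

lemma hasDerivAt_tailRatio_mul_expPrimitive (hr : IsConfining_s12 r) (hr' : Continuous r')
    (hgc : Continuous g) (hg : HasExpGrowth g) (y : ℝ) :
    HasDerivAt (fun y => tailRatio r g y * expPrimitive r' y)
      (((r' y - r y) * tailRatio r g y - g y) * expPrimitive r' y) y := by
  have hint := (hr.integrable_mul_expPrimitive hgc hg).integrableAtFilter atTop
  refine ((hasDerivAt_tailRatio hr.continuous hgc hint y).mul
    (hasDerivAt_expPrimitive hr' y)).congr_deriv ?_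
  ring

lemma tendsto_tailRatio_mul_expPrimitive_atTop (hr : IsConfining_s12 r) (hr' : IsConfining_s12 r')
    (hg : HasExpGrowth g) :
    Tendsto (fun y => tailRatio r g y * expPrimitive r' y) atTop (𝓝 0) := by
  obtain ⟨_, hTop⟩ := hg.exists_isBigO_atTop
  exact tendsto_mul_expPrimitive_atTop hr'.continuous hr'.tendsto_atTop
    (isBigO_tailRatio_exp_atTop hr.continuous hr.tendsto_atTop hTop)

lemma tendsto_tailRatio_mul_expPrimitive_atBot (hr : IsConfining_s12 r) (hr' : IsConfining_s12 r')
    (hgc : Continuous g) (hg : HasExpGrowth g) (hzero : ∫ y, g y * expPrimitive r y = 0) :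
    Tendsto (fun y => tailRatio r g y * expPrimitive r' y) atBot (𝓝 0) := by
  have hreflect := (hr.comp_neg.tendsto_tailRatio_mul_expPrimitive_atTop hr'.comp_neg
    hg.comp_neg).neg.comp tendsto_neg_atBot_atTop
  simpa only [Function.comp_def, expPrimitive_comp_neg, neg_neg, neg_mul, neg_zero,
    tailRatio_comp_neg (hr.integrable_mul_expPrimitive hgc hg) hzero] using hreflect

lemma integrable_deriv_tailRatio_mul_expPrimitive (hr : IsConfining_s12 r) (hr' : IsConfining_s12 r')
    (hgc : Continuous g) (hg : HasExpGrowth g) (hzero : ∫ y, g y * expPrimitive r y = 0) :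
    Integrable fun y => ((r' y - r y) * tailRatio r g y - g y) * expPrimitive r' y := by
  have hint := hr.integrable_mul_expPrimitive hgc hg
  have hc : Continuous fun y => ((r' y - r y) * tailRatio r g y - g y) * expPrimitive r' y :=
    (((hr'.continuous.sub hr.continuous).mul (continuous_tailRatio hr.continuous hgc
      (hint.integrableAtFilter atTop))).sub hgc).mul (continuous_expPrimitive hr'.continuous)
  obtain ⟨_, hTop⟩ := hg.exists_isBigO_atTop
  obtain ⟨_, hBot⟩ := hg.comp_neg.exists_isBigO_atTop
  refine integrable_iff_integrableAtFilter_atBot_atTop.2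
    ⟨⟨integrableAtFilter_atBot_iff_comp_neg.2 ?_, ?_⟩, hc.locallyIntegrable⟩
  · convert integrableAtFilter_deriv_tailRatio_mul_expPrimitive hr.comp_neg.continuous
      hr.comp_neg.tendsto_atTop hr'.comp_neg.continuous hr'.comp_neg.tendsto_atTop
      (hgc.comp' continuous_neg) hBot using 2 with y
    rw [expPrimitive_comp_neg, tailRatio_comp_neg hint hzero]
    ring
  · exact integrableAtFilter_deriv_tailRatio_mul_expPrimitive hr.continuous hr.tendsto_atTop
      hr'.continuous hr'.tendsto_atTop hgc hTop

lemma integral_deriv_tailRatio_mul_expPrimitive (hr : IsConfining_s12 r) (hr' : IsConfining_s12 r')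
    (hgc : Continuous g) (hg : HasExpGrowth g) (hzero : ∫ y, g y * expPrimitive r y = 0) :
    ∫ y, ((r' y - r y) * tailRatio r g y - g y) * expPrimitive r' y = 0 := by
  simpa only [sub_zero] using integral_of_hasDerivAt_of_tendsto
    (hr.hasDerivAt_tailRatio_mul_expPrimitive hr'.continuous hgc hg)
    (hr.integrable_deriv_tailRatio_mul_expPrimitive hr' hgc hg hzero)
    (hr.tendsto_tailRatio_mul_expPrimitive_atBot hr' hgc hg hzero)
    (hr.tendsto_tailRatio_mul_expPrimitive_atTop hr' hg)

end IsConfining_s12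

/-- Coefficients of an operator `a ∂² + f ∂` whose invariant density `rho1 a f` integrates all
data of exponential growth. -/
structure AdmissibleCoeffs (a f : ℝ → ℝ) : Prop where
  continuous : Continuous a
  pos : ∀ y, 0 < a y
  expGrowth_inv : HasExpGrowth fun y => (a y)⁻¹
  isConfining : IsConfining_s12 fun y => f y / a y

lemma tendsto_div_atTop_of_dissipative {a f : ℝ → ℝ} {lp β C : ℝ} (ha : ∀ y, 0 < a y)
    (hle : ∀ y, a y ≤ lp) (hβ : 0 < β) (hdis : ∀ y, f y * y ≤ -β * y ^ 2 + C) :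
    Tendsto (fun y => f y / a y) atTop atBot := by
  have hlp : 0 < lp := (ha 0).trans_le (hle 0)
  have hlin : Tendsto (fun y => -β * y + |C|) atTop atBot :=
    tendsto_atBot_add_const_right _ _ (tendsto_id.const_mul_atTop_of_neg (neg_lt_zero.2 hβ))
  refine tendsto_atBot_mono' _ ?_ (hlin.atBot_div_const hlp)
  filter_upwards [eventually_ge_atTop 1, hlin.eventually_le_atBot 0] with y hy hnonpos
  have hf : f y ≤ -β * y + |C| := by
    refine le_of_mul_le_mul_right ?_ (one_pos.trans_le hy)
    nlinarith [hdis y, le_abs_self C, abs_nonneg C]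
  rw [div_le_div_iff₀ (ha y) hlp]
  calc f y * lp ≤ (-β * y + |C|) * lp := by gcongr
    _ ≤ (-β * y + |C|) * a y := mul_le_mul_of_nonpos_left (hle y) hnonpos

namespace AdmissibleCoeffs

variable {a f h : ℝ → ℝ}

lemma of_dissipative {lm lp β C : ℝ} (ha : Continuous a) (hf : Continuous f) (hlm : 0 < lm)
    (hbnd : ∀ y, lm ≤ a y ∧ a y ≤ lp) (hβ : 0 < β) (hdis : ∀ y, f y * y ≤ -β * y ^ 2 + C) :
    AdmissibleCoeffs a f := by
  have hpos : ∀ y, 0 < a y := fun y => hlm.trans_le (hbnd y).1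
  refine ⟨ha, hpos, .of_polynomial_bound (K := lm⁻¹) (m := 0) fun y => ?_,
    hf.div ha fun y => (hpos y).ne',
    tendsto_div_atTop_of_dissipative hpos (fun y => (hbnd y).2) hβ hdis, ?_⟩
  · rw [abs_of_pos (inv_pos.2 (hpos y)), pow_zero]
    have := inv_anti₀ hlm (hbnd y).1
    linarith [inv_pos.2 hlm]
  · have hreflect := tendsto_div_atTop_of_dissipative (a := fun y => a (-y))
      (f := fun y => -f (-y)) (fun y => hpos (-y)) (fun y => (hbnd (-y)).2) hβ (C := C)
      fun y => by linarith [hdis (-y), neg_sq y]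
    simpa only [Function.comp_def, neg_neg, neg_div] using
      tendsto_neg_atBot_atTop.comp (hreflect.comp tendsto_neg_atBot_atTop)

lemma continuous_inv (H : AdmissibleCoeffs a f) : Continuous fun y => (a y)⁻¹ :=
  H.continuous.inv₀ fun y => (H.pos y).ne'

lemma rho1_pos (H : AdmissibleCoeffs a f) (y : ℝ) : 0 < rho1 a f y :=
  mul_pos (inv_pos.2 (H.pos y)) (Real.exp_pos _)

lemma integrable_mul_rho1 (H : AdmissibleCoeffs a f) (hc : Continuous h) (hh : HasExpGrowth h) :
    Integrable fun y => h y * rho1 a f y := by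
  simpa only [rho1, expPrimitive, mul_assoc] using H.isConfining.integrable_mul_expPrimitive
    (hc.fun_mul H.continuous_inv) (hh.mul H.expGrowth_inv)

lemma integrable_mul_piDen (H : AdmissibleCoeffs a f) (hc : Continuous h)
    (hh : HasExpGrowth h) : Integrable fun y => h y * piDen a f y := by
  simpa only [piDen, mul_div_assoc] using (H.integrable_mul_rho1 hc hh).div_const (Z1 a f)

lemma Z1_pos (H : AdmissibleCoeffs a f) : 0 < Z1 a f := by
  have hint : Integrable (rho1 a f) := by
    simpa only [one_mul] using H.integrable_mul_rho1 continuous_const (.const 1)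
  have hsupp : Function.support (rho1 a f) = univ :=
    Function.support_eq_univ fun y => (H.rho1_pos y).ne'
  refine (integral_pos_iff_support_of_nonneg (fun y => (H.rho1_pos y).le) hint).2 ?_
  simp [hsupp]

lemma integral_piDen (H : AdmissibleCoeffs a f) : ∫ y, piDen a f y = 1 := by
  simp only [piDen]
  rw [integral_div]
  exact div_self H.Z1_pos.ne'

lemma integral_sub_const_mul_piDen (H : AdmissibleCoeffs a f) (hc : Continuous h)
    (hh : HasExpGrowth h) (c : ℝ) :
    ∫ y, (h y - c) * piDen a f y = (∫ y, h y * piDen a f y) - c := by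
  simp only [sub_mul]
  rw [integral_sub (H.integrable_mul_piDen hc hh)
    (H.integrable_mul_piDen continuous_const (.const c)), integral_const_mul, H.integral_piDen,
    mul_one]

lemma integral_sub_hbar_mul_piDen (H : AdmissibleCoeffs a f) (hc : Continuous h)
    (hh : HasExpGrowth h) : ∫ y, (h y - hbar a f h) * piDen a f y = 0 := by
  rw [H.integral_sub_const_mul_piDen hc hh, hbar, sub_self]

lemma expPrimitive_eq (H : AdmissibleCoeffs a f) (y : ℝ) :
    expPrimitive (fun s => f s / a s) y = Z1 a f * (a y * piDen a f y) := by
  have ha := (H.pos y).ne'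
  have hZ := H.Z1_pos.ne'
  rw [piDen, rho1, expPrimitive]
  field_simp

lemma div_mul_expPrimitive (H : AdmissibleCoeffs a f) (c y : ℝ) :
    c / a y * expPrimitive (fun s => f s / a s) y = Z1 a f * (c * piDen a f y) := by
  have ha := (H.pos y).ne'
  rw [H.expPrimitive_eq]
  field_simp

lemma integral_sub_hbar_div_mul_expPrimitive (H : AdmissibleCoeffs a f) (hc : Continuous h)
    (hh : HasExpGrowth h) :
    ∫ y, (h y - hbar a f h) / a y * expPrimitive (fun s => f s / a s) y = 0 := by
  simp only [H.div_mul_expPrimitive]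
  rw [integral_const_mul, H.integral_sub_hbar_mul_piDen hc hh, mul_zero]

lemma Fint_div_eq_neg_tailRatio (H : AdmissibleCoeffs a f) (hc : Continuous h)
    (hh : HasExpGrowth h) (y : ℝ) :
    Fint a f h y / (a y * piDen a f y) =
      -tailRatio (fun s => f s / a s) (fun s => (h s - hbar a f h) / a s) y := by
  have hint : Integrable fun s => (h s - hbar a f h) * piDen a f s :=
    H.integrable_mul_piDen (hc.sub continuous_const) (hh.sub (.const _))
  have hsplit := intervalIntegral.integral_Iic_add_Ioi (b := y) hint.integrableOn
    hint.integrableOn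
  rw [H.integral_sub_hbar_mul_piDen hc hh] at hsplit
  simp only [tailRatio, H.div_mul_expPrimitive]
  rw [integral_const_mul, H.expPrimitive_eq, mul_div_mul_left _ _ H.Z1_pos.ne', Fint,
    eq_neg_of_add_eq_zero_left hsplit, neg_div]

end AdmissibleCoeffs

lemma transferIntegrand_eq {a₁ a₂ f₁ f₂ h₁ h₂ : ℝ → ℝ} (H₁ : AdmissibleCoeffs a₁ f₁)
    (H₂ : AdmissibleCoeffs a₂ f₂) (hc₂ : Continuous h₂) (hh₂ : HasExpGrowth h₂) (y : ℝ) :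
    (h₁ y - h₂ y -
        ((f₁ y - f₂ y) * (Fint a₂ f₂ h₂ y / (a₂ y * piDen a₂ f₂ y)) +
          (a₁ y - a₂ y) * ((h₂ y - hbar a₂ f₂ h₂) / a₂ y -
            f₂ y * Fint a₂ f₂ h₂ y / ((a₂ y) ^ 2 * piDen a₂ f₂ y)))) * piDen a₁ f₁ y =
      (h₁ y - hbar a₂ f₂ h₂) * piDen a₁ f₁ y +
        ((f₁ y / a₁ y - f₂ y / a₂ y) *
            tailRatio (fun s => f₂ s / a₂ s) (fun s => (h₂ s - hbar a₂ f₂ h₂) / a₂ s) y -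
          (h₂ y - hbar a₂ f₂ h₂) / a₂ y) *
          expPrimitive (fun s => f₁ s / a₁ s) y / Z1 a₁ f₁ := by
  have ha₁ := (H₁.pos y).ne'
  have ha₂ := (H₂.pos y).ne'
  have hZ₁ := H₁.Z1_pos.ne'
  have hdrift : f₂ y * Fint a₂ f₂ h₂ y / ((a₂ y) ^ 2 * piDen a₂ f₂ y) =
      f₂ y / a₂ y * (Fint a₂ f₂ h₂ y / (a₂ y * piDen a₂ f₂ y)) := by
    rw [sq, mul_assoc, mul_div_mul_comm]
  rw [hdrift, H₂.Fint_div_eq_neg_tailRatio hc₂ hh₂, H₁.expPrimitive_eq]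
  field_simp
  ring

theorem one_dim_difference_transfer_formula_general {a₁ a₂ f₁ f₂ h₁ h₂ : ℝ → ℝ}
    (H₁ : AdmissibleCoeffs a₁ f₁) (H₂ : AdmissibleCoeffs a₂ f₂)
    (hc₁ : Continuous h₁) (hc₂ : Continuous h₂)
    (hh₁ : HasExpGrowth h₁) (hh₂ : HasExpGrowth h₂) :
    (∫ y, h₁ y * piDen a₁ f₁ y) - (∫ y, h₂ y * piDen a₂ f₂ y) =
      ∫ y, (h₁ y - h₂ y -
        ((f₁ y - f₂ y) * (Fint a₂ f₂ h₂ y / (a₂ y * piDen a₂ f₂ y)) +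
          (a₁ y - a₂ y) * ((h₂ y - hbar a₂ f₂ h₂) / a₂ y -
            f₂ y * Fint a₂ f₂ h₂ y / ((a₂ y) ^ 2 * piDen a₂ f₂ y)))) * piDen a₁ f₁ y := by
  have hgc : Continuous fun y => (h₂ y - hbar a₂ f₂ h₂) / a₂ y :=
    (hc₂.sub continuous_const).div₀ H₂.continuous fun y => (H₂.pos y).ne'
  have hg : HasExpGrowth fun y => (h₂ y - hbar a₂ f₂ h₂) / a₂ y := by
    simpa only [div_eq_mul_inv] using (hh₂.sub (.const _)).mul H₂.expGrowth_inv
  have hzero := H₂.integral_sub_hbar_div_mul_expPrimitive hc₂ hh₂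
  have hflux := H₂.isConfining.integrable_deriv_tailRatio_mul_expPrimitive H₁.isConfining
    hgc hg hzero
  have hdata : Integrable fun y => (h₁ y - hbar a₂ f₂ h₂) * piDen a₁ f₁ y :=
    H₁.integrable_mul_piDen (hc₁.sub continuous_const) (hh₁.sub (.const _))
  simp only [transferIntegrand_eq H₁ H₂ hc₂ hh₂]
  rw [integral_add hdata (hflux.div_const _), H₁.integral_sub_const_mul_piDen hc₁ hh₁, integral_div,
    H₂.isConfining.integral_deriv_tailRatio_mul_expPrimitive H₁.isConfining hgc hg hzero,
    zero_div, add_zero, hbar]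

end

/-- the one-dimensional difference transfer formula between averages
against two explicit invariant densities, via the explicit Poisson solution for the
second pair of coefficients. -/
theorem one_dim_difference_transfer_formula
    (a₁ a₂ f₁ f₂ h₁ h₂ : ℝ → ℝ) (lm lp β C K : ℝ) (m : ℕ)
    (ha₁c : Continuous a₁) (ha₂c : Continuous a₂)
    (hf₁c : Continuous f₁) (hf₂c : Continuous f₂)
    (hh₁c : Continuous h₁) (hh₂c : Continuous h₂)
    (hlm : 0 < lm)
    (hbnd₁ : ∀ y, lm ≤ a₁ y ∧ a₁ y ≤ lp) (hbnd₂ : ∀ y, lm ≤ a₂ y ∧ a₂ y ≤ lp)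
    (hβ : 0 < β) (hC : 0 < C)
    (hdis₁ : ∀ y, f₁ y * y ≤ -β * y ^ 2 + C) (hdis₂ : ∀ y, f₂ y * y ≤ -β * y ^ 2 + C)
    (hh₁ : ∀ y, |h₁ y| ≤ K * (1 + |y| ^ m)) (hh₂ : ∀ y, |h₂ y| ≤ K * (1 + |y| ^ m)) :
    (∫ y, h₁ y * piDen a₁ f₁ y) - (∫ y, h₂ y * piDen a₂ f₂ y) =
      ∫ y, (h₁ y - h₂ y -
        ((f₁ y - f₂ y) * (Fint a₂ f₂ h₂ y / (a₂ y * piDen a₂ f₂ y)) +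
          (a₁ y - a₂ y) * ((h₂ y - hbar a₂ f₂ h₂) / a₂ y -
            f₂ y * Fint a₂ f₂ h₂ y / ((a₂ y) ^ 2 * piDen a₂ f₂ y)))) * piDen a₁ f₁ y :=
  one_dim_difference_transfer_formula_general
    (.of_dissipative ha₁c hf₁c hlm hbnd₁ hβ hdis₁) (.of_dissipative ha₂c hf₂c hlm hbnd₂ hβ hdis₂)
    hh₁c hh₂c (.of_polynomial_bound hh₁) (.of_polynomial_bound hh₂)

end
end
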